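/- arXiv:1909.06425 — 3 statements merged into one kernel-verified Lean document; each statement's English description precedes it below -/
import Mathlib

section
/- Let A be a real n×n matrix, B a real n×m matrix, and G^d a real n×p matrix, and let the disturbance set be the zonotope Z(0,G^d). Suppose there exist k ∈ ℕ, a real n×k matrix T and a real m×k matrix M such that the horizontal concatenation [A T + B M , G^d] (an n×(k+p) matrix) equals the horizontal concatenation [0_{n×p} , T], and Z(0,T) ⊆ X and Z(0,M) ⊆ U for given sets X ⊆ ℝⁿ, U ⊆ ℝᵐ. Then Z(0,T) is a robust control invariant set for the system x(t+1) = A x(t) + B u(t) + d(t): for every x ∈ Z(0,T) there exists u ∈ Z(0,M) (hence u ∈ U) such that for every d ∈ Z(0,G^d), A x + B u + d ∈ Z(0,T). -/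
/-!
Write `x = T b` with `‖b‖ ≤ 1` and apply the control `u = M b`. For a disturbance `d = Gᵈ e` with
`‖e‖ ≤ 1`, the successor state is `(A T + B M) b + Gᵈ e = [A T + B M, Gᵈ] (b, e)`, where the stacked
vector `(b, e)` again has sup norm at most one. By hypothesis this equals `[0, T] (b, e)`. The zero
block annihilates the first `p` entries of `(b, e)`, so the successor is `T c` with `c` the last `k`
entries, and `‖c‖ ≤ 1`.
-/

/-- The zonotope `Z(c,H) = {c + H b : b, ‖b‖_∞ ≤ 1}` (sup norm on `ι → ℝ`). -/
def zono {n : ℕ} {ι : Type*} [Fintype ι] (c : Fin n → ℝ) (H : Matrix (Fin n) ι ℝ) :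
    Set (Fin n → ℝ) :=
  {x | ∃ b : ι → ℝ, ‖b‖ ≤ 1 ∧ x = c + H.mulVec b}

/-- Horizontal concatenation of two matrices with `Fin`-indexed columns. -/
def hcat {n k p : ℕ} {R : Type*} (A : Matrix (Fin n) (Fin k) R) (B : Matrix (Fin n) (Fin p) R) :
    Matrix (Fin n) (Fin (k + p)) R :=
  Matrix.of fun i => Fin.append (A i) (B i)

/-- Horizontal concatenation of two matrices with arbitrary column index types. -/
def scat {n : ℕ} {α β : Type*} {R : Type*} (A : Matrix (Fin n) α R) (B : Matrix (Fin n) β R) :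
    Matrix (Fin n) (α ⊕ β) R :=
  Matrix.of fun i => Sum.elim (A i) (B i)

/-- Minkowski sum of two sets. -/
def minkSum {α : Type*} [Add α] (A B : Set α) : Set α :=
  {x | ∃ a ∈ A, ∃ b ∈ B, x = a + b}

theorem hcat_mulVec {n k p : ℕ} (A : Matrix (Fin n) (Fin k) ℝ) (B : Matrix (Fin n) (Fin p) ℝ)
    (c : Fin (k + p) → ℝ) :
    (hcat A B).mulVec c =
      A.mulVec (fun j => c (Fin.castAdd p j)) + B.mulVec (fun j => c (Fin.natAdd k j)) := by
  ext i
  simp [hcat, Matrix.mulVec, dotProduct, Fin.sum_univ_add]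

theorem norm_append_le_one {k p : ℕ} {b : Fin k → ℝ} {e : Fin p → ℝ} (hb : ‖b‖ ≤ 1)
    (he : ‖e‖ ≤ 1) : ‖(Fin.append b e : Fin (k + p) → ℝ)‖ ≤ 1 := by
  refine (pi_norm_le_iff_of_nonneg zero_le_one).2 fun j => ?_
  refine Fin.addCases (fun j => ?_) (fun j => ?_) j
  · simpa only [Fin.append_left] using (norm_le_pi_norm b j).trans hb
  · simpa only [Fin.append_right] using (norm_le_pi_norm e j).trans he

/-- If `[A T + B M, Gᵈ] = [0, T]`, `Z(0,T) ⊆ X` and `Z(0,M) ⊆ U`,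
then `Z(0,T)` is a robust control invariant set for `x⁺ = A x + B u + d`. -/
theorem zonotope_rci_of_concat_eq
    {n m p k : ℕ} (A : Matrix (Fin n) (Fin n) ℝ) (B : Matrix (Fin n) (Fin m) ℝ)
    (Gd : Matrix (Fin n) (Fin p) ℝ) (T : Matrix (Fin n) (Fin k) ℝ)
    (M : Matrix (Fin m) (Fin k) ℝ)
    (X : Set (Fin n → ℝ)) (U : Set (Fin m → ℝ))
    (hTM : hcat (A * T + B * M) Gd =
      Matrix.submatrix (hcat (0 : Matrix (Fin n) (Fin p) ℝ) T) id (Fin.cast (Nat.add_comm k p)))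
    (hX : zono 0 T ⊆ X) (hU : zono 0 M ⊆ U) :
    ∀ x ∈ zono 0 T, ∃ u, u ∈ zono 0 M ∧ u ∈ U ∧
      ∀ d ∈ zono 0 Gd, A.mulVec x + B.mulVec u + d ∈ zono 0 T := by
  rintro x ⟨b, hb, rfl⟩
  have hu : (0 : Fin m → ℝ) + M.mulVec b ∈ zono 0 M := ⟨b, hb, rfl⟩
  refine ⟨0 + M.mulVec b, hu, hU hu, ?_⟩
  rintro d ⟨e, he, rfl⟩
  -- The coefficients of the successor state: the stacked vector `(b, e)` without its first `p`
  -- entries.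
  refine ⟨fun j => Fin.append b e (Fin.cast (Nat.add_comm p k) (Fin.natAdd p j)), ?_, ?_⟩
  · exact (pi_norm_le_iff_of_nonneg zero_le_one).2 fun j =>
      (norm_le_pi_norm (Fin.append b e) _).trans (norm_append_le_one hb he)
  · have h1 := hcat_mulVec (A * T + B * M) Gd (Fin.append b e)
    have h2 := Matrix.submatrix_mulVec_equiv (hcat (0 : Matrix (Fin n) (Fin p) ℝ) T)
      (Fin.append b e) id (finCongr (Nat.add_comm k p))
    have h3 := hcat_mulVec (0 : Matrix (Fin n) (Fin p) ℝ) T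
      (Fin.append b e ∘ (finCongr (Nat.add_comm k p)).symm)
    simp only [Fin.append_left, Fin.append_right] at h1
    rw [Matrix.zero_mulVec, zero_add] at h3
    simp only [zero_add, Matrix.mulVec_mulVec]
    rw [← Matrix.add_mulVec, ← h1, hTM]
    exact h2.trans h3
end

section
/- Consider the network of coupled linear subsystems x_i(t+1) = A_{ii} x_i(t) + B_{ii} u_i(t) + Σ_{j≠i} A_{ij} x_j(t) + Σ_{j≠i} B_{ij} u_j(t) + d_i(t), i ∈ ℐ finite, with disturbance sets D_i ⊆ ℝ^{n_i}. Suppose sets Ω_i ⊆ ℝ^{n_i} and Θ_i ⊆ ℝ^{m_i} satisfy the decentralized one-step invariance condition: for every i and every x_i ∈ Ω_i there exists u_i ∈ Θ_i such that for all x_j ∈ Ω_j, u_j ∈ Θ_j (j ≠ i) and all d_i ∈ D_i, A_{ii} x_i + B_{ii} u_i + Σ_{j≠i} A_{ij} x_j + Σ_{j≠i} B_{ij} u_j + d_i ∈ Ω_i. Then there exist decentralized feedback controllers κ_i : Ω_i → Θ_i (each depending only on the local state x_i) such that for any initial states x_i(0) ∈ Ω_i for all i and any disturbance sequences d_i : ℕ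 → D_i, the joint closed-loop trajectory with u_i(t) = κ_i(x_i(t)) satisfies x_i(t) ∈ Ω_i for all i ∈ ℐ and all t ∈ ℕ. -/
/-- From the decentralized one-step invariance condition one obtains
decentralized feedback controllers `κᵢ : Ωᵢ → Θᵢ` (each depending only on the local
state) rendering every joint closed-loop trajectory invariant: `xᵢ(t) ∈ Ωᵢ` for all
`i` and `t`. -/
theorem exists_decentralized_controllers_of_one_step_invariance
    {ι : Type*} [Fintype ι] [DecidableEq ι]
    (nd md : ι → ℕ)
    (A : ∀ i j : ι, Matrix (Fin (nd i)) (Fin (nd j)) ℝ)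
    (B : ∀ i j : ι, Matrix (Fin (nd i)) (Fin (md j)) ℝ)
    (Ω : ∀ i : ι, Set (Fin (nd i) → ℝ)) (Θ : ∀ i : ι, Set (Fin (md i) → ℝ))
    (D : ∀ i : ι, Set (Fin (nd i) → ℝ))
    (hinv : ∀ i : ι, ∀ xi ∈ Ω i, ∃ ui ∈ Θ i,
      ∀ (xs : ∀ j : ι, Fin (nd j) → ℝ) (us : ∀ j : ι, Fin (md j) → ℝ),
        (∀ j : ι, j ≠ i → xs j ∈ Ω j) →
        (∀ j : ι, j ≠ i → us j ∈ Θ j) →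
        ∀ di ∈ D i,
          (A i i).mulVec xi + (B i i).mulVec ui
            + (∑ j ∈ Finset.univ.erase i, (A i j).mulVec (xs j))
            + (∑ j ∈ Finset.univ.erase i, (B i j).mulVec (us j)) + di
          ∈ Ω i) :
    ∃ κ : ∀ i : ι, (Fin (nd i) → ℝ) → (Fin (md i) → ℝ),
      (∀ i : ι, ∀ xi ∈ Ω i, κ i xi ∈ Θ i) ∧
      ∀ (x : ℕ → ∀ i : ι, Fin (nd i) → ℝ) (d : ℕ → ∀ i : ι, Fin (nd i) → ℝ),
        (∀ i : ι, x 0 i ∈ Ω i) →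
        (∀ t, ∀ i : ι, d t i ∈ D i) →
        (∀ t, ∀ i : ι, x (t + 1) i =
          (A i i).mulVec (x t i) + (B i i).mulVec (κ i (x t i))
            + (∑ j ∈ Finset.univ.erase i, (A i j).mulVec (x t j))
            + (∑ j ∈ Finset.univ.erase i, (B i j).mulVec (κ j (x t j))) + d t i) →
        ∀ t, ∀ i : ι, x t i ∈ Ω i := by
  -- The input `ui` is chosen before the neighbours' data, so it is a function of `xi` alone.
  choose! κ hκΘ hκΩ using hinv
  refine ⟨κ, hκΘ, fun x d hx0 hd hdyn t => ?_⟩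
  induction t with
  | zero => exact hx0
  | succ t ih =>
    intro i
    rw [hdyn t i]
    exact hκΩ i (x t i) (ih i) (x t) (fun j => κ j (x t j))
      (fun j _ => ih j) (fun j _ => hκΘ j (x t j) (ih j)) (d t i) (hd t i)
end

section
/- Let A be a real n×n matrix, B a real n×m matrix, and G^d a real n×p matrix, and suppose T ∈ ℝ^{n×k} and M ∈ ℝ^{m×k} satisfy the horizontal-concatenation equation [A T + B M , G^d] = [0_{n×p} , T]. Let z : ℕ → ℝⁿ and v : ℕ → ℝᵐ be any nominal trajectory of the disturbance-free system, i.e., z(t+1) = A z(t) + B v(t) for all t. Then for every initial state x₀ with x₀ − z(0) ∈ Z(0,T) and every disturbance sequence d : ℕ → Z(0,G^d), there exists a control sequence of the form u(t) = v(t) + w(t) with w(t) ∈ Z(0,M) for all t, such that the trajectory x(0) = x₀, x(t+1) = A x(t) + B u(t) + d(t) satisfies x(t) ∈ {z(t)} ⊕ Z(0,T) for all t ∈ ℕ (i.e., the true trajectory stays inside the tube of cross-section Z(0,T) around the nominal trajectory). -/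
theorem hcat_mulVec_append {n k p : ℕ} (P : Matrix (Fin n) (Fin k) ℝ)
    (Q : Matrix (Fin n) (Fin p) ℝ) (b : Fin k → ℝ) (c : Fin p → ℝ) :
    (hcat P Q).mulVec (Fin.append b c) = P.mulVec b + Q.mulVec c := by
  ext i
  simp [hcat, Matrix.mulVec, dotProduct, Fin.sum_univ_add]

/-- The successor generator: the last `k` entries of the concatenated vector `(b, δ)`. -/
def nextGen {k p : ℕ} (b : Fin k → ℝ) (δ : Fin p → ℝ) : Fin k → ℝ :=
  fun j => Fin.append b δ (Fin.cast (Nat.add_comm p k) (Fin.natAdd p j))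

theorem nextGen_norm_le {k p : ℕ} {b : Fin k → ℝ} {δ : Fin p → ℝ} (hb : ‖b‖ ≤ 1)
    (hδ : ‖δ‖ ≤ 1) : ‖nextGen b δ‖ ≤ 1 := by
  have h : ∀ l : Fin (k + p), ‖Fin.append b δ l‖ ≤ 1 := by
    intro l
    refine Fin.addCases (fun i => ?_) (fun i => ?_) l
    · simpa only [Fin.append_left] using (norm_le_pi_norm b i).trans hb
    · simpa only [Fin.append_right] using (norm_le_pi_norm δ i).trans hδ
  exact (pi_norm_le_iff_of_nonneg zero_le_one).2 fun j => h _

/-- Both sides are the product of the common matrix `[P, G] = [0, T]` with the vector `(b, δ)`. -/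
theorem mulVec_nextGen {n k p : ℕ} {P T : Matrix (Fin n) (Fin k) ℝ} {G : Matrix (Fin n) (Fin p) ℝ}
    (h : hcat P G =
      Matrix.submatrix (hcat (0 : Matrix (Fin n) (Fin p) ℝ) T) id (Fin.cast (Nat.add_comm k p)))
    (b : Fin k → ℝ) (δ : Fin p → ℝ) :
    T.mulVec (nextGen b δ) = P.mulVec b + G.mulVec δ := by
  rw [← hcat_mulVec_append, h]
  ext i
  -- Reindex the columns from `k + p` to `p + k`, so that the sum splits along `[0, T]`.
  simp only [Matrix.mulVec, dotProduct, Matrix.submatrix_apply, id]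
  rw [← Equiv.sum_comp (finCongr (Nat.add_comm p k)), Fin.sum_univ_add]
  simp [hcat, nextGen]

/-- The generators of the error trajectory, driven by the disturbance generators `δ t`. -/
def genSeq {k p : ℕ} (b₀ : Fin k → ℝ) (δ : ℕ → Fin p → ℝ) : ℕ → Fin k → ℝ
  | 0 => b₀
  | t + 1 => nextGen (genSeq b₀ δ t) (δ t)

/-- Tube MPC: under `[A T + B M, Gᵈ] = [0, T]`, for any nominal
trajectory `z(t+1) = A z(t) + B v(t)`, any initial state with `x₀ − z(0) ∈ Z(0,T)` and
any disturbance sequence in `Z(0,Gᵈ)`, there are feedback corrections `w(t) ∈ Z(0,M)`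
such that the trajectory driven by `u(t) = v(t) + w(t)` stays in the tube
`{z(t)} ⊕ Z(0,T)` for all `t`. -/
theorem tube_mpc_invariance
    {n m p k : ℕ} (A : Matrix (Fin n) (Fin n) ℝ) (B : Matrix (Fin n) (Fin m) ℝ)
    (Gd : Matrix (Fin n) (Fin p) ℝ) (T : Matrix (Fin n) (Fin k) ℝ)
    (M : Matrix (Fin m) (Fin k) ℝ)
    (hTM : hcat (A * T + B * M) Gd =
      Matrix.submatrix (hcat (0 : Matrix (Fin n) (Fin p) ℝ) T) id (Fin.cast (Nat.add_comm k p)))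
    (z : ℕ → Fin n → ℝ) (v : ℕ → Fin m → ℝ)
    (hz : ∀ t, z (t + 1) = A.mulVec (z t) + B.mulVec (v t)) :
    ∀ x₀ : Fin n → ℝ, x₀ - z 0 ∈ zono 0 T →
      ∀ d : ℕ → Fin n → ℝ, (∀ t, d t ∈ zono 0 Gd) →
        ∃ w : ℕ → Fin m → ℝ, (∀ t, w t ∈ zono 0 M) ∧
          ∀ x : ℕ → Fin n → ℝ, x 0 = x₀ →
            (∀ t, x (t + 1) = A.mulVec (x t) + B.mulVec (v t + w t) + d t) →
            ∀ t, x t ∈ minkSum {z t} (zono 0 T) := by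
  intro x₀ hx₀ d hd
  obtain ⟨b₀, hb₀, he₀⟩ := hx₀
  choose δ hδ hdδ using hd
  have hb : ∀ t, ‖genSeq b₀ δ t‖ ≤ 1 := by
    intro t
    induction t with
    | zero => exact hb₀
    | succ t ih => exact nextGen_norm_le ih (hδ t)
  refine ⟨fun t => M.mulVec (genSeq b₀ δ t), fun t => ⟨_, hb t, (zero_add _).symm⟩, ?_⟩
  intro x hx0 hx t
  have hxt : x t = z t + T.mulVec (genSeq b₀ δ t) := by
    induction t with
    | zero =>
      rw [zero_add] at he₀
      rw [hx0, genSeq, ← he₀, add_sub_cancel]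
    | succ t ih =>
      rw [hx, hz, genSeq, mulVec_nextGen hTM, ih, hdδ t]
      simp only [Matrix.mulVec_add, Matrix.add_mulVec, Matrix.mulVec_mulVec, zero_add]
      abel
  exact ⟨z t, rfl, _, ⟨_, hb t, (zero_add _).symm⟩, hxt⟩
end
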